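/- Convergence of telescoping series (Theorem 4.3): Let p, q, r ∈ (0,∞], θ ∈ (0, min{p,r}], and let {t_k} ∈ X^{α₃}_{α,σ,p} be a p-admissible weight sequence with σ₁ = θ·p̄_θ (p̄_θ the conjugate exponent of p_θ := p/θ), α₁ > n·(1/θ − 1/r), σ₂ ∈ (0,∞], α₃ ≥ 0, and let {t_{k,m}} be its associated multiple sequence. Suppose V_k ∈ L_r^{loc}(ℝⁿ) for k ∈ ℕ₀, set v_k := V_k − V_{k−1} (with V_{−1} ≡ 0), and assume A := (Σ_{k=0}^∞ (Σ_{m∈ℤⁿ} t^p_{k,m}·2^{knp/θ}·‖v_k‖^p_{L_r(Q^n_{k,m})})^{q/p})^{1/q} < ∞. Then the series Σ_{k=0}^∞ v_k converges in L_r^{loc}(ℝⁿ) to a function φ, and (Σ_{k=0}^∞ (Σ_{m∈ℤⁿ} t^p_{k,m}·2^{knp/r}·‖φ − V_k‖^p_{L_r(Q^n_{k,m})})^{q/p})^{1/q} + (Σ_{m∈ℤⁿ} t^p_{0,m}·‖φ‖^p_{L_r(Q^n_{0,m})})^{1/p} ≤ C·A, with C > 0 independent of the sequence {V_k} (usual modifications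 for p, q = ∞). -/

import Mathlib

open MeasureTheory ENNReal Filter
open scoped Classical

noncomputable section

/-- `ℓ_q` quasinorm of a family of extended nonnegative reals (supremum when `q = ∞`). -/
def lqNorm {ι : Type*} (q : ℝ≥0∞) (c : ι → ℝ≥0∞) : ℝ≥0∞ :=
  if q = ∞ then ⨆ i, c i else (∑' i, c i ^ q.toReal) ^ (1 / q.toReal)

/-- `L_p` quasinorm of an `ℝ≥0∞`-valued function (essential supremum when `p = ∞`). -/
def lpNormE {α : Type*} [MeasurableSpace α] (p : ℝ≥0∞) (μ : Measure α) (f : α → ℝ≥0∞) : ℝ≥0∞ :=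
  if p = ∞ then essSup f μ else (∫⁻ x, f x ^ p.toReal ∂μ) ^ (1 / p.toReal)

abbrev Rn (n : ℕ) := Fin n → ℝ

/-- Open cube centred at `x` of half-side `s` (i.e. `x + s·Iⁿ`). -/
def openCube {n : ℕ} (x : Rn n) (s : ℝ) : Set (Rn n) := {y | ∀ i, |y i - x i| < s}

/-- Open axis-parallel cube with lower corner `c` and side `s`. -/
def cubeAt {n : ℕ} (c : Rn n) (s : ℝ) : Set (Rn n) := {x | ∀ i, c i < x i ∧ x i < c i + s}

/-- Open dyadic cube `Q^n_{k,m}` of side `2^{-k}`. -/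
def dyadicCube (n k : ℕ) (m : Fin n → ℤ) : Set (Rn n) :=
  {x | ∀ i, (m i : ℝ) / 2 ^ k < x i ∧ x i < ((m i : ℝ) + 1) / 2 ^ k}

/-- Half-open dyadic cube `Q̃^n_{k,m}`. -/
def dyadicCubeHalf (n k : ℕ) (m : Fin n → ℤ) : Set (Rn n) :=
  {x | ∀ i, (m i : ℝ) / 2 ^ k ≤ x i ∧ x i < ((m i : ℝ) + 1) / 2 ^ k}

def dyadicCenter (n k : ℕ) (m : Fin n → ℤ) : Rn n := fun i => ((m i : ℝ) + 1 / 2) / 2 ^ k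

/-- The concentric dilate `c·Q^n_{k,m}` of a dyadic cube. -/
def dilatedCube (n k : ℕ) (m : Fin n → ℤ) (c : ℝ) : Set (Rn n) :=
  openCube (dyadicCenter n k m) (c / 2 ^ (k + 1))

def euclNorm {d : ℕ} (y : Rn d) : ℝ := Real.sqrt (∑ i, y i ^ 2)

/-- The difference `Δ^l(h)g(x)`. -/
def diffl {n : ℕ} (l : ℕ) (h : Rn n) (g : Rn n → ℝ) (x : Rn n) : ℝ :=
  ∑ j ∈ Finset.range (l + 1), ((l.choose j : ℝ) * (-1 : ℝ) ^ (l + j)) * g (x + (j : ℝ) • h)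

/-- The difference `Δ^l(h,Ω)g(x)`, vanishing unless the segment `[x, x + l·h]` lies in `Ω`. -/
def difflOn {n : ℕ} (l : ℕ) (Ω : Set (Rn n)) (h : Rn n) (g : Rn n → ℝ) (x : Rn n) : ℝ :=
  if ∀ τ ∈ Set.Icc (0 : ℝ) 1, x + (τ * l) • h ∈ Ω then diffl l h g x else 0

/-- `δ^l_r(Q)g`, where `s` is the side length of the cube `Q`. -/
def deltaE (n l : ℕ) (r : ℝ≥0∞) (s : ℝ) (Q : Set (Rn n)) (g : Rn n → ℝ) : ℝ≥0∞ :=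
  ENNReal.ofReal s ^ (-(2 * (n : ℝ)) / r.toReal) *
    eLpNorm (fun hx : Rn n × Rn n => diffl l hx.1 g hx.2) r
      ((volume.restrict (openCube (0 : Rn n) s)).prod (volume.restrict Q))

/-- `δ^l_r(Q,Ω)g`, where `s` is the side length of the cube `Q`. -/
def deltaEOn (n l : ℕ) (r : ℝ≥0∞) (s : ℝ) (Q Ω : Set (Rn n)) (g : Rn n → ℝ) : ℝ≥0∞ :=
  ENNReal.ofReal s ^ (-(2 * (n : ℝ)) / r.toReal) *
    eLpNorm (fun hx : Rn n × Rn n => difflOn l Ω hx.1 g hx.2) r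
      ((volume.restrict (openCube (0 : Rn n) s)).prod (volume.restrict Q))

/-- `Δ̄^l_r(s)g(x)`. -/
def barDelta (n l : ℕ) (r : ℝ≥0∞) (s : ℝ) (g : Rn n → ℝ) (x : Rn n) : ℝ≥0∞ :=
  ENNReal.ofReal s ^ (-(n : ℝ) / r.toReal) *
    eLpNorm (fun h : Rn n => diffl l h g x) r (volume.restrict (openCube (0 : Rn n) s))

/-- Membership in `L_r^{loc}(ℝⁿ)`. -/
def MemLrLoc (n : ℕ) (r : ℝ≥0∞) (φ : Rn n → ℝ) : Prop :=
  Measurable φ ∧ ∀ K : Set (Rn n), IsCompact K → eLpNorm φ r (volume.restrict K) < ∞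

def IsWeight {n : ℕ} (w : Rn n → ℝ) : Prop := Measurable w ∧ ∀ x, 0 < w x

/-- A `p`-admissible weight sequence. -/
def pAdmissible (n : ℕ) (p : ℝ≥0∞) (t : ℕ → Rn n → ℝ) : Prop :=
  ∀ k, IsWeight (t k) ∧ MemLrLoc n p (t k)

/-- The multiple sequence `t_{k,m} = ‖t_k‖_{L_p(Q^n_{k,m})}` associated with a weight sequence. -/
def tkm (n : ℕ) (p : ℝ≥0∞) (t : ℕ → Rn n → ℝ) (k : ℕ) (m : Fin n → ℤ) : ℝ≥0∞ :=
  eLpNorm (t k) p (volume.restrict (dyadicCube n k m))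

/-- The weight `t̄_k` built from a multiple sequence `T`. -/
def tbarOf (n : ℕ) (p : ℝ≥0∞) (T : ℕ → (Fin n → ℤ) → ℝ≥0∞) (k : ℕ) (x : Rn n) : ℝ≥0∞ :=
  (2 : ℝ≥0∞) ^ (((k * n : ℕ) : ℝ) / p.toReal) *
    ∑' m : Fin n → ℤ, (dyadicCubeHalf n k m).indicator (fun _ => T k m) x

/-- `(2^{kn} ∫_Q f^e)^{1/e}`, with the essential supremum modification for `e = ∞`. -/
def avgNorm (n k : ℕ) (e : ℝ≥0∞) (Q : Set (Rn n)) (f : Rn n → ℝ≥0∞) : ℝ≥0∞ :=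
  if e = ∞ then essSup f (volume.restrict Q)
  else ((2 : ℝ≥0∞) ^ (k * n) * ∫⁻ x in Q, f x ^ e.toReal) ^ (1 / e.toReal)

/-- Conditions (2.14)–(2.16) of the class `X^{α₃}_{α,σ,p}`, expressed for a multiple
sequence `T`. -/
def MemXseq (n : ℕ) (α₁ α₂ α₃ : ℝ) (σ₁ σ₂ p : ℝ≥0∞) (T : ℕ → (Fin n → ℤ) → ℝ≥0∞) : Prop :=
  (∃ C₁ : ℝ≥0∞, 0 < C₁ ∧ C₁ < ∞ ∧ ∀ k j : ℕ, k ≤ j → ∀ m : Fin n → ℤ,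
    avgNorm n k p (dyadicCube n k m) (tbarOf n p T k) *
      avgNorm n k σ₁ (dyadicCube n k m) (fun x => (tbarOf n p T j x)⁻¹) ≤
      C₁ * (2 : ℝ≥0∞) ^ (α₁ * ((k : ℝ) - (j : ℝ)))) ∧
  (∃ C₂ : ℝ≥0∞, 0 < C₂ ∧ C₂ < ∞ ∧ ∀ k j : ℕ, k ≤ j → ∀ m : Fin n → ℤ,
    (avgNorm n k p (dyadicCube n k m) (tbarOf n p T k))⁻¹ *
      avgNorm n k σ₂ (dyadicCube n k m) (tbarOf n p T j) ≤
      C₂ * (2 : ℝ≥0∞) ^ (α₂ * ((j : ℝ) - (k : ℝ)))) ∧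
  (∀ k : ℕ, ∀ m m' : Fin n → ℤ, (∀ i, |m i - m' i| ≤ 1) →
    0 < T k m ∧ T k m ≤ (2 : ℝ≥0∞) ^ (α₃ : ℝ) * T k m')

/-- The weighted class `X^{α₃}_{α,σ,p}` of weight sequences. -/
def MemX (n : ℕ) (α₁ α₂ α₃ : ℝ) (σ₁ σ₂ p : ℝ≥0∞) (t : ℕ → Rn n → ℝ) : Prop :=
  pAdmissible n p t ∧ MemXseq n α₁ α₂ α₃ σ₁ σ₂ p (tkm n p t)

/-- Quasinorm of `B̃^l_{p,q,r}(ℝⁿ, T)` with an `ℝ≥0∞`-valued weight sequence `T`. -/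
def tildeBnormE (n l : ℕ) (p q r : ℝ≥0∞) (T : ℕ → Rn n → ℝ≥0∞) (φ : Rn n → ℝ) : ℝ≥0∞ :=
  lqNorm q (fun k : ℕ =>
    lpNormE p volume (fun x =>
      T (k + 1) x *
        deltaE n l r ((2 : ℝ) ^ (1 - ((k : ℤ) + 1))) (openCube x ((2 : ℝ) ^ (-((k : ℤ) + 1)))) φ)) +
  lpNormE p volume (fun x => T 0 x * eLpNorm φ r (volume.restrict (openCube x 1)))

/-- Quasinorm of `B̃^l_{p,q,r}(ℝⁿ, {t_k})`. -/
def tildeBnorm (n l : ℕ) (p q r : ℝ≥0∞) (t : ℕ → Rn n → ℝ) (φ : Rn n → ℝ) : ℝ≥0∞ :=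
  tildeBnormE n l p q r (fun k x => ENNReal.ofReal (t k x)) φ

/-- Membership in `B̃^l_{p,q,r}(ℝⁿ, {t_k})`. -/
def MemTildeB (n l : ℕ) (p q r : ℝ≥0∞) (t : ℕ → Rn n → ℝ) (φ : Rn n → ℝ) : Prop :=
  MemLrLoc n r φ ∧ tildeBnorm n l p q r t φ < ∞

/-- Quasinorm of `B̄^l_{p,q,r}(ℝⁿ, {t_k})`. -/
def barBnorm (n l : ℕ) (p q r : ℝ≥0∞) (t : ℕ → Rn n → ℝ) (φ : Rn n → ℝ) : ℝ≥0∞ :=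
  lqNorm q (fun k : ℕ =>
    lpNormE p volume (fun x =>
      ENNReal.ofReal (t (k + 1) x) * barDelta n l r ((2 : ℝ) ^ (-((k : ℤ) + 1))) φ x)) +
  lpNormE p volume (fun x => ENNReal.ofReal (t 0 x) * eLpNorm φ r (volume.restrict (openCube x 1)))

/-- Membership in `B̄^l_{p,q,r}(ℝⁿ, {t_k})`. -/
def MemBarB (n l : ℕ) (p q r : ℝ≥0∞) (t : ℕ → Rn n → ℝ) (φ : Rn n → ℝ) : Prop :=
  MemLrLoc n r φ ∧ barBnorm n l p q r t φ < ∞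

/-- The class `A^{loc}_∞`. -/
def MemAlocInfty (n : ℕ) (w : Rn n → ℝ) : Prop :=
  ∃ α : ℝ, α ∈ Set.Ioo (0 : ℝ) 1 ∧ ∃ M : ℝ≥0∞, M < ∞ ∧
    ∀ (c : Rn n) (s : ℝ), 0 < s → s ≤ 1 →
      ∀ F : Set (Rn n), F ⊆ cubeAt c s → MeasurableSet F →
        ENNReal.ofReal α * volume (cubeAt c s) ≤ volume F →
        (∫⁻ x in cubeAt c s, ENNReal.ofReal (w x)) ≤ M * ∫⁻ x in F, ENNReal.ofReal (w x)

/-- The class `A^{loc}_1`. -/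
def MemAloc1 (n : ℕ) (w : Rn n → ℝ) : Prop :=
  ∃ C : ℝ≥0∞, C < ∞ ∧ ∀ (c : Rn n) (s : ℝ), 0 < s → s ≤ 1 →
    ∀ᵐ x ∂volume.restrict (cubeAt c s),
      (∫⁻ y in cubeAt c s, ENNReal.ofReal (w y)) ≤ C * volume (cubeAt c s) * ENNReal.ofReal (w x)

/-- The class `A^{loc}_{p₀}` for `p₀ > 1`. -/
def MemAlocGt (n : ℕ) (p₀ : ℝ) (w : Rn n → ℝ) : Prop :=
  ∃ C : ℝ≥0∞, C < ∞ ∧ ∀ (c : Rn n) (s : ℝ), 0 < s → s ≤ 1 →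
    ((volume (cubeAt c s))⁻¹ * ∫⁻ y in cubeAt c s, ENNReal.ofReal (w y)) *
      ((volume (cubeAt c s))⁻¹ *
        ∫⁻ y in cubeAt c s, ENNReal.ofReal (w y) ^ (-(1 : ℝ) / (p₀ - 1))) ^ (p₀ - 1) ≤ C

/-- The class `A^{loc}_{p₀}` for `p₀ ∈ [1,∞)`. -/
def MemAlocP (n : ℕ) (p₀ : ℝ) (w : Rn n → ℝ) : Prop :=
  if p₀ = 1 then MemAloc1 n w else MemAlocGt n p₀ w

/-- The class `{}^{loc}Y^{α₃}_{α₁,α₂}` of weight sequences of variable smoothness. -/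
def MemLocY (n : ℕ) (α₁ α₂ α₃ : ℝ) (s : ℕ → Rn n → ℝ) : Prop :=
  (∀ k, IsWeight (s k)) ∧
  (∃ C : ℝ, 0 < C ∧ ∀ j k : ℕ, j ≤ k → ∀ x : Rn n,
    C⁻¹ * (2 : ℝ) ^ (α₁ * ((k : ℝ) - (j : ℝ))) ≤ s k x / s j x ∧
      s k x / s j x ≤ C * (2 : ℝ) ^ (α₂ * ((k : ℝ) - (j : ℝ)))) ∧
  (∀ k : ℕ, ∀ x y : Rn n, euclNorm (x - y) ≤ (2 : ℝ) ^ (-(k : ℤ)) →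
    s k x ≤ (2 : ℝ) ^ α₃ * s k y)

/-- The set `Ξ^{d,n}_{k,m} = Q^n_{k,m} × (2^{-k}B^d ∖ 2^{-k-1}B^d) ⊂ ℝ^{n+d}`. -/
def Xi (n d k : ℕ) (m : Fin n → ℤ) : Set (Rn (n + d)) :=
  {z | (fun i => z (Fin.castAdd d i)) ∈ dyadicCube n k m ∧
       euclNorm (fun i : Fin d => z (Fin.natAdd n i)) < (2 : ℝ) ^ (-(k : ℤ)) ∧
       (2 : ℝ) ^ (-(k : ℤ) - 1) ≤ euclNorm (fun i : Fin d => z (Fin.natAdd n i))}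

/-- The multiple sequence `γ̂_{k,m} = ‖γ‖_{L_p(Ξ^{d,n}_{k,m})}` generated by a weight `γ`. -/
def gammaHat (n d : ℕ) (p : ℝ≥0∞) (γ : Rn (n + d) → ℝ) (k : ℕ) (m : Fin n → ℤ) : ℝ≥0∞ :=
  eLpNorm γ p (volume.restrict (Xi n d k m))

def delta1Good (n d : ℕ) (p : ℝ≥0∞) (γ : Rn (n + d) → ℝ) (δ : ℝ) : Prop :=
  ∃ C : ℝ≥0∞, C < ∞ ∧ ∀ k j : ℕ, k ≤ j → ∀ m : Fin n → ℤ,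
    (∑' m' : {m' : Fin n → ℤ // dyadicCube n j m' ⊆ dyadicCube n k m},
        gammaHat n d p γ j m'.1 ^ p.toReal) ≤
      C * (2 : ℝ≥0∞) ^ ((((k : ℝ) - (j : ℝ)) * (d : ℝ)) * δ) * gammaHat n d p γ k m ^ p.toReal

/-- `δ₁(γ,n,d)`. -/
def delta1 (n d : ℕ) (p : ℝ≥0∞) (γ : Rn (n + d) → ℝ) : ℝ :=
  sSup {δ : ℝ | 0 < δ ∧ delta1Good n d p γ δ}

def delta2Good (n d : ℕ) (p : ℝ≥0∞) (γ : Rn (n + d) → ℝ) (δ : ℝ) : Prop :=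
  ∃ C : ℝ≥0∞, C < ∞ ∧ ∀ k j : ℕ, k ≤ j → ∀ m : Fin n → ℤ,
    ∀ G : Set (Fin n → ℤ), (∀ m' ∈ G, dyadicCube n j m' ⊆ dyadicCube n k m) →
      (∑' m' : G, gammaHat n d p γ j m'.1 ^ p.toReal) ≤
        C * (volume (⋃ m' ∈ G, dyadicCube n j m') / volume (dyadicCube n k m)) ^ δ *
          ∑' m' : {m' : Fin n → ℤ // dyadicCube n j m' ⊆ dyadicCube n k m},
            gammaHat n d p γ j m'.1 ^ p.toReal

/-- `δ₂(γ,n,d)`. -/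
def delta2 (n d : ℕ) (p : ℝ≥0∞) (γ : Rn (n + d) → ℝ) : ℝ :=
  sSup {δ : ℝ | 0 < δ ∧ delta2Good n d p γ δ}

/-- The cardinal B-spline of degree `deg` with knots `0, 1, …, deg + 1`. -/
def cardB : ℕ → ℝ → ℝ
  | 0, x => if 0 ≤ x ∧ x < 1 then 1 else 0
  | (d + 1), x => (x / (d + 1)) * cardB d x + (((d : ℝ) + 2 - x) / (d + 1)) * cardB d (x - 1)

/-- The tensor-product B-spline `N^{deg}_{k,m}` on `ℝⁿ`. -/
def Bspl (n deg k : ℕ) (m : Fin n → ℤ) (x : Rn n) : ℝ :=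
  ∏ i, cardB deg (2 ^ k * x i - (m i : ℝ))

/-- The spline `Σ_m β_m N^{deg}_{k,m}`. -/
def splineSum (n deg k : ℕ) (β : (Fin n → ℤ) → ℝ) (x : Rn n) : ℝ :=
  ∑' m, β m * Bspl n deg k m x

/-- A dyadic spline of degree `deg` (an element of `Σ^{deg} = ⋃_k Σ^{deg}_k`). -/
def IsSplineFn (n deg : ℕ) (S : Rn n → ℝ) : Prop :=
  ∃ (k : ℕ) (β : (Fin n → ℤ) → ℝ), S = splineSum n deg k β

/-- The weighted best spline approximation `s_k(φ)` by splines of degree `deg`. -/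
def sApprox (n deg : ℕ) (p r : ℝ≥0∞) (T : ℕ → (Fin n → ℤ) → ℝ≥0∞) (φ : Rn n → ℝ) (k : ℕ) :
    ℝ≥0∞ :=
  ⨅ β : (Fin n → ℤ) → ℝ,
    lqNorm p (fun m => T k m *
      eLpNorm (fun x => φ x - splineSum n deg k β x) r (volume.restrict (dyadicCube n k m)))

/-- `s_j(φ)` for `j ∈ {-1, 0, 1, 2, …}`, including the term `s_{-1}`. -/
def sApproxZ (n deg : ℕ) (p r : ℝ≥0∞) (T : ℕ → (Fin n → ℤ) → ℝ≥0∞) (φ : Rn n → ℝ) (j : ℤ) :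
    ℝ≥0∞ :=
  if j < 0 then
    lqNorm p (fun m => T 0 m * eLpNorm φ r (volume.restrict (dyadicCube n 0 m)))
  else sApprox n deg p r T φ j.toNat

/-- Local best polynomial approximation `E_l(φ,Q)_r` by polynomials of total degree `< l`. -/
def bestApproxE (n l : ℕ) (r : ℝ≥0∞) (φ : Rn n → ℝ) (Q : Set (Rn n)) : ℝ≥0∞ :=
  ⨅ P : {P : MvPolynomial (Fin n) ℝ // P.totalDegree < l},
    eLpNorm (fun x => φ x - MvPolynomial.eval x P.1) r (volume.restrict Q)

/-- The modulus of continuity `ω_l(φ,Q)_r`. -/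
def modulusE (n l : ℕ) (r : ℝ≥0∞) (φ : Rn n → ℝ) (Q : Set (Rn n)) : ℝ≥0∞ :=
  ⨆ h : Rn n, eLpNorm (difflOn l Q h φ) r (volume : Measure (Rn n))

def partialDeriv {N : ℕ} (i : Fin N) (ψ : Rn N → ℝ) : Rn N → ℝ :=
  fun x => fderiv ℝ ψ x (Pi.single i 1)

def iterPD {N : ℕ} : List (Fin N) → (Rn N → ℝ) → Rn N → ℝ
  | [], ψ => ψ
  | i :: L, ψ => partialDeriv i (iterPD L ψ)

def multiIdxList {N : ℕ} (α : Fin N → ℕ) : List (Fin N) :=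
  (List.finRange N).foldr (fun i L => List.replicate (α i) i ++ L) []

/-- Iterated partial derivative `D^α`. -/
def multiDeriv {N : ℕ} (α : Fin N → ℕ) (ψ : Rn N → ℝ) : Rn N → ℝ :=
  iterPD (multiIdxList α) ψ

/-- `g` is the weak (Sobolev) derivative `D^α f`. -/
def IsWeakDeriv {N : ℕ} (α : Fin N → ℕ) (f g : Rn N → ℝ) : Prop :=
  ∀ ψ : Rn N → ℝ, ContDiff ℝ (⊤ : ℕ∞) ψ → HasCompactSupport ψ →
    ∫ x, f x * multiDeriv α ψ x = (-1 : ℝ) ^ (∑ i, α i) * ∫ x, g x * ψ x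

/-- The weighted Sobolev norm `Σ_{|α| ≤ l} ‖γ · D^α f‖_{L_p}` computed from a system `D` of
weak derivatives. -/
def sobNorm (N : ℕ) (p : ℝ≥0∞) (l : ℕ) (γ : Rn N → ℝ) (D : (Fin N → ℕ) → Rn N → ℝ) : ℝ≥0∞ :=
  ∑' α : Fin N → ℕ,
    if (∑ i, α i) ≤ l then eLpNorm (fun x => γ x * D α x) p volume else 0

/-- Membership in the weighted Sobolev space `W^l_p(ℝ^N, γ)`, witnessed by the system `D`
of weak derivatives of `f`. -/
def MemW (N : ℕ) (p : ℝ≥0∞) (l : ℕ) (γ : Rn N → ℝ) (f : Rn N → ℝ)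
    (D : (Fin N → ℕ) → Rn N → ℝ) : Prop :=
  MeasureTheory.LocallyIntegrable f volume ∧ D 0 = f ∧
    (∀ α : Fin N → ℕ, (∑ i, α i) ≤ l →
      MeasureTheory.LocallyIntegrable (D α) volume ∧ IsWeakDeriv α f (D α)) ∧
    sobNorm N p l γ D < ∞

/-- `φ` is the trace of `f` on the plane `y = 0`. -/
def IsTraceSob {n d : ℕ} (f : Rn (n + d) → ℝ) (φ : Rn n → ℝ) : Prop :=
  ∃ f' : Rn (n + d) → ℝ, f' =ᵐ[volume] f ∧
    ∀ (c : Rn n) (s : ℝ), 0 < s →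
      Filter.Tendsto (fun y : Rn d => ∫ x in cubeAt c s, |f' (Fin.append x y) - φ x|)
        (nhds 0) (nhds 0)

/-- The weight sequence `γ_k(x) = 2^{k(l+n/p)} Σ_m χ_{Q̃^n_{k,m}}(x) γ̂_{k,m}`. -/
def gammaSeq (n d : ℕ) (p : ℝ≥0∞) (l : ℕ) (γ : Rn (n + d) → ℝ) (k : ℕ) (x : Rn n) : ℝ≥0∞ :=
  (2 : ℝ≥0∞) ^ ((k : ℝ) * ((l : ℝ) + (n : ℝ) / p.toReal)) *
    ∑' m : Fin n → ℤ, (dyadicCubeHalf n k m).indicator (fun _ => gammaHat n d p γ k m) x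

/-- Conjugate exponent in `ℝ≥0∞`. -/
def conjE (e : ℝ≥0∞) : ℝ≥0∞ := (1 - e⁻¹)⁻¹

/-- The exponent `p_θ`. -/
def pTheta (p θ : ℝ≥0∞) : ℝ≥0∞ := if θ = ∞ ∧ p = ∞ then 1 else p / θ

/-- The telescoping differences `v_k = V_k - V_{k-1}` (with `V_{-1} ≡ 0`). -/
def vseq {n : ℕ} (V : ℕ → Rn n → ℝ) (k : ℕ) (x : Rn n) : ℝ :=
  if k = 0 then V 0 x else V k x - V (k - 1) x

/-! ### Abstract lemmas on `lpNormE` and `lqNorm` -/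

theorem ts_lintegral_Lp_finset_le {α : Type*} [MeasurableSpace α] {μ : Measure α} {s : ℝ}
    (hs : 1 ≤ s) (F : ℕ → α → ℝ≥0∞) (hF : ∀ i, AEMeasurable (F i) μ) (N : ℕ) :
    (∫⁻ x, (∑ i ∈ Finset.range N, F i x) ^ s ∂μ) ^ (1 / s) ≤
      ∑ i ∈ Finset.range N, (∫⁻ x, F i x ^ s ∂μ) ^ (1 / s) := by
  have hs0 : 0 < s := by linarith
  induction N with
  | zero => simp [hs0]
  | succ N ih =>
    simp only [Finset.sum_range_succ]
    have h := ENNReal.lintegral_Lp_add_le (μ := μ) (p := s)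
      (f := fun x => ∑ i ∈ Finset.range N, F i x) (g := F N)
      (Finset.aemeasurable_fun_sum _ fun i _ => hF i) (hF N) hs
    refine le_trans h ?_
    gcongr

theorem ts_lintegral_Lp_tsum_le {α : Type*} [MeasurableSpace α] {μ : Measure α} {s : ℝ}
    (hs : 1 ≤ s) (F : ℕ → α → ℝ≥0∞) (hF : ∀ i, AEMeasurable (F i) μ) :
    (∫⁻ x, (∑' i, F i x) ^ s ∂μ) ^ (1 / s) ≤ ∑' i, (∫⁻ x, F i x ^ s ∂μ) ^ (1 / s) := by
  have hs0 : 0 < s := by linarith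
  have hmono : ∀ x, Monotone fun N => (∑ i ∈ Finset.range N, F i x) := by
    intro x a b hab
    exact Finset.sum_le_sum_of_subset (Finset.range_mono hab)
  have e1 : ∀ x, (∑' i, F i x) ^ s = ⨆ N, (∑ i ∈ Finset.range N, F i x) ^ s := by
    intro x
    have h1 : Tendsto (fun N => (∑ i ∈ Finset.range N, F i x) ^ s) atTop
        (nhds ((∑' i, F i x) ^ s)) :=
      (ENNReal.continuous_rpow_const.tendsto _).comp (ENNReal.tendsto_nat_tsum fun i => F i x)
    have h2 := tendsto_atTop_iSup (f := fun N => (∑ i ∈ Finset.range N, F i x) ^ s)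
      (fun a b hab => ENNReal.rpow_le_rpow (hmono x hab) hs0.le)
    exact tendsto_nhds_unique h1 h2
  simp only [e1]
  rw [lintegral_iSup']
  · rw [one_div, ENNReal.rpow_inv_le_iff hs0]
    refine iSup_le fun N => ?_
    rw [← ENNReal.rpow_inv_le_iff hs0, ← one_div]
    exact (ts_lintegral_Lp_finset_le hs F hF N).trans (ENNReal.sum_le_tsum _)
  · intro N
    exact (Finset.aemeasurable_fun_sum _ fun i _ => hF i).pow_const s
  · exact Eventually.of_forall fun x a b hab => ENNReal.rpow_le_rpow (hmono x hab) hs0.le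

theorem ts_lp_rho {α : Type*} [MeasurableSpace α] {μ : Measure α} {p : ℝ≥0∞} {ρ : ℝ}
    (hρ : 0 < ρ) (hρp : ENNReal.ofReal ρ ≤ p) (g : α → ℝ≥0∞) (f : ℕ → α → ℝ≥0∞)
    (hf : ∀ i, AEMeasurable (f i) μ) (h : ∀ᵐ x ∂μ, g x ^ ρ ≤ ∑' i, f i x ^ ρ) :
    lpNormE p μ g ^ ρ ≤ ∑' i, lpNormE p μ (f i) ^ ρ := by
  unfold lpNormE
  by_cases hp : p = ∞
  · simp only [hp, if_true]
    have h1 : ∀ᵐ x ∂μ, ∀ i, f i x ≤ essSup (f i) μ := by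
      rw [ae_all_iff]; intro i; exact ENNReal.ae_le_essSup _
    rw [← ENNReal.le_rpow_inv_iff hρ]
    refine essSup_le_of_ae_le _ ?_
    filter_upwards [h, h1] with x hx hx1
    rw [ENNReal.le_rpow_inv_iff hρ]
    exact hx.trans (ENNReal.tsum_le_tsum fun i => ENNReal.rpow_le_rpow (hx1 i) hρ.le)
  · simp only [hp, if_false]
    have hp' : ρ ≤ p.toReal := by
      rwa [ENNReal.ofReal_le_iff_le_toReal hp] at hρp
    have hp0 : 0 < p.toReal := by linarith
    have hs : 1 ≤ p.toReal / ρ := by rwa [le_div_iff₀ hρ, one_mul]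
    have key : ∀ u : α → ℝ≥0∞, ((∫⁻ x, u x ^ p.toReal ∂μ) ^ (1 / p.toReal)) ^ ρ =
        (∫⁻ x, (u x ^ ρ) ^ (p.toReal / ρ) ∂μ) ^ (1 / (p.toReal / ρ)) := by
      intro u
      have e : ρ * (p.toReal / ρ) = p.toReal := by field_simp
      simp only [← ENNReal.rpow_mul, e]
      congr 1
      field_simp
    simp only [key]
    refine le_trans ?_ (ts_lintegral_Lp_tsum_le hs (fun i x => f i x ^ ρ)
      fun i => (hf i).pow_const ρ)
    refine ENNReal.rpow_le_rpow (lintegral_mono_ae ?_) (by positivity)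
    filter_upwards [h] with x hx
    exact ENNReal.rpow_le_rpow hx (by positivity)

theorem ts_lqNorm_eq {ι : Type*} (q : ℝ≥0∞) (c : ι → ℝ≥0∞) :
    lqNorm q c = @lpNormE ι ⊤ q (@Measure.count ι ⊤) c := by
  let _ : MeasurableSpace ι := ⊤
  unfold lqNorm lpNormE
  simp [lintegral_count]

theorem ts_lq_rho {ι : Type*} {q : ℝ≥0∞} {ρ : ℝ} (hρ : 0 < ρ) (hρq : ENNReal.ofReal ρ ≤ q)
    (g : ι → ℝ≥0∞) (f : ℕ → ι → ℝ≥0∞) (h : ∀ x, g x ^ ρ ≤ ∑' i, f i x ^ ρ) :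
    lqNorm q g ^ ρ ≤ ∑' i, lqNorm q (f i) ^ ρ := by
  let _ : MeasurableSpace ι := ⊤
  simp only [ts_lqNorm_eq]
  exact ts_lp_rho hρ hρq g f (fun i => measurable_from_top.aemeasurable) (Eventually.of_forall h)

theorem ts_lq_mono {ι : Type*} {q : ℝ≥0∞} {f g : ι → ℝ≥0∞} (h : ∀ x, f x ≤ g x) :
    lqNorm q f ≤ lqNorm q g := by
  unfold lqNorm
  split_ifs
  · exact iSup_mono h
  · refine ENNReal.rpow_le_rpow (ENNReal.tsum_le_tsum fun i => ?_) (by positivity)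
    exact ENNReal.rpow_le_rpow (h i) (by positivity)

theorem ts_lq_const_mul {ι : Type*} {q : ℝ≥0∞} (hq : 0 < q) (c : ℝ≥0∞) (f : ι → ℝ≥0∞) :
    lqNorm q (fun i => c * f i) = c * lqNorm q f := by
  unfold lqNorm
  split_ifs with h
  · rw [ENNReal.mul_iSup]
  · have h0 : 0 < q.toReal := ENNReal.toReal_pos hq.ne' h
    simp only [ENNReal.mul_rpow_of_nonneg _ _ h0.le, ENNReal.tsum_mul_left]
    rw [ENNReal.mul_rpow_of_nonneg _ _ (by positivity), ← ENNReal.rpow_mul,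
      mul_one_div_cancel h0.ne', ENNReal.rpow_one]

theorem ts_lq_comp_le {ι κ : Type*} {q : ℝ≥0∞} (e : κ → ι) (he : Function.Injective e)
    (f : ι → ℝ≥0∞) : lqNorm q (fun i => f (e i)) ≤ lqNorm q f := by
  unfold lqNorm
  split_ifs
  · exact iSup_le fun i => le_iSup f (e i)
  · refine ENNReal.rpow_le_rpow ?_ (by positivity)
    exact ENNReal.tsum_comp_le_tsum_of_injective he (fun i => f i ^ q.toReal)

theorem ts_le_lq {ι : Type*} {q : ℝ≥0∞} (hq : 0 < q) (f : ι → ℝ≥0∞) (i : ι) :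
    f i ≤ lqNorm q f := by
  unfold lqNorm
  split_ifs with h
  · exact le_iSup f i
  · have h0 : 0 < q.toReal := ENNReal.toReal_pos hq.ne' h
    rw [one_div, ENNReal.le_rpow_inv_iff h0]
    exact ENNReal.le_tsum (f := fun i => f i ^ q.toReal) i

/-- `ℓ_r` is dominated by `ℓ_s` for `s ≤ r`. -/
theorem ts_lq_anti {ι : Type*} {s r : ℝ≥0∞} (hs : 0 < s) (hsr : s ≤ r) (f : ι → ℝ≥0∞) :
    lqNorm r f ≤ lqNorm s f := by
  by_cases hr : r = ∞
  · rw [lqNorm, if_pos hr]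
    exact iSup_le fun i => ts_le_lq hs f i
  have hs' : s ≠ ∞ := ne_top_of_le_ne_top hr hsr
  have hs0 : 0 < s.toReal := ENNReal.toReal_pos hs.ne' hs'
  have hle : s.toReal ≤ r.toReal := ENNReal.toReal_mono hr hsr
  have hr0 : 0 < r.toReal := by linarith
  set M := lqNorm s f with hM
  have hM2 : ∑' i, f i ^ s.toReal = M ^ s.toReal := by
    rw [hM, lqNorm, if_neg hs', ← ENNReal.rpow_mul, one_div_mul_cancel hs0.ne', ENNReal.rpow_one]
  rw [lqNorm, if_neg hr, one_div, ENNReal.rpow_inv_le_iff hr0]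
  have hd : 0 ≤ r.toReal - s.toReal := by linarith
  calc ∑' i, f i ^ r.toReal ≤ ∑' i, f i ^ s.toReal * M ^ (r.toReal - s.toReal) := by
        refine ENNReal.tsum_le_tsum fun i => ?_
        have : r.toReal = s.toReal + (r.toReal - s.toReal) := by ring
        conv_lhs => rw [this, ENNReal.rpow_add_of_nonneg _ _ hs0.le hd]
        gcongr
        exact ts_le_lq hs f i
    _ = M ^ s.toReal * M ^ (r.toReal - s.toReal) := by rw [ENNReal.tsum_mul_right, hM2]
    _ = M ^ r.toReal := by
        rw [← ENNReal.rpow_add_of_nonneg _ _ hs0.le hd]; congr 1; ring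

/-- The fibrewise computation of the `ℓ_p` quasinorm. -/
theorem ts_lq_fiber {ι κ : Type*} {p : ℝ≥0∞} (hp : 0 < p) (π : ι → κ) (f : ι → ℝ≥0∞) :
    lqNorm p (fun m : κ => lqNorm p (fun i : {i // π i = m} => f i.1)) ≤ lqNorm p f := by
  by_cases h : p = ∞
  · simp only [lqNorm, if_pos h]
    exact iSup_le fun m => iSup_le fun i => le_iSup f i.1
  · have h0 : 0 < p.toReal := ENNReal.toReal_pos hp.ne' h
    simp only [lqNorm, if_neg h]
    refine ENNReal.rpow_le_rpow ?_ (by positivity)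
    simp only [← ENNReal.rpow_mul, one_div_mul_cancel h0.ne', ENNReal.rpow_one]
    rw [← ENNReal.tsum_sigma (fun (m : κ) (i : {i // π i = m}) => f i.1 ^ p.toReal)]
    exact le_of_eq ((Equiv.sigmaFiberEquiv π).tsum_eq (fun i => f i ^ p.toReal))

theorem ts_eLpNorm_eq {α : Type*} [MeasurableSpace α] {μ : Measure α} {r : ℝ≥0∞} (hr : 0 < r)
    (f : α → ℝ) : eLpNorm f r μ = lpNormE r μ (fun x => ‖f x‖ₑ) := by
  unfold lpNormE
  split_ifs with h
  · rw [h, eLpNorm_exponent_top]; rfl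
  · rw [eLpNorm_eq_lintegral_rpow_enorm_toReal hr.ne' h]

theorem ts_lp_cover {α κ : Type*} [MeasurableSpace α] [Countable κ] {μ : Measure α} {r s : ℝ≥0∞}
    (hs : 0 < s) (hsr : s ≤ r) (S : Set α) (T : κ → Set α) (hST : S ⊆ ⋃ i, T i)
    (f : α → ℝ≥0∞) :
    lpNormE r (μ.restrict S) f ≤ lqNorm s (fun i => lpNormE r (μ.restrict (T i)) f) := by
  refine le_trans ?_ (ts_lq_anti hs hsr _)
  have hr := hs.trans_le hsr
  unfold lpNormE lqNorm
  by_cases h : r = ∞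
  · simp only [if_pos h]
    refine essSup_le_of_ae_le _ ?_
    refine ae_restrict_of_ae_restrict_of_subset hST ?_
    rw [ae_restrict_iUnion_iff]
    intro i
    filter_upwards [ENNReal.ae_le_essSup (μ := μ.restrict (T i)) f] with x hx
    exact hx.trans (le_iSup (fun i => essSup f (μ.restrict (T i))) i)
  · have h0 : 0 < r.toReal := ENNReal.toReal_pos hr.ne' h
    simp only [if_neg h]
    refine ENNReal.rpow_le_rpow ?_ (by positivity)
    simp only [← ENNReal.rpow_mul, one_div_mul_cancel h0.ne', ENNReal.rpow_one]
    exact (lintegral_mono_set hST).trans (lintegral_iUnion_le _ _)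

/-! ### Exponents and Hölder's inequality -/

theorem ts_sigma {p θ : ℝ≥0∞} (hθ0 : 0 < θ) (hθp : θ ≤ p) :
    (θ = ∞ ∧ p = ∞ ∧ θ * conjE (pTheta p θ) = ∞) ∨
    (θ ≠ ∞ ∧ p = ∞ ∧ θ * conjE (pTheta p θ) = θ) ∨
    (θ ≠ ∞ ∧ p = θ ∧ θ * conjE (pTheta p θ) = ∞) ∨
    (θ ≠ ∞ ∧ p ≠ ∞ ∧ θ < p ∧ θ * conjE (pTheta p θ) ≠ ∞ ∧ θ * conjE (pTheta p θ) ≠ 0 ∧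
      1 / θ.toReal = 1 / p.toReal + 1 / (θ * conjE (pTheta p θ)).toReal) := by
  unfold conjE pTheta
  by_cases h1 : θ = ∞
  · left
    have h2 : p = ∞ := top_le_iff.1 (h1 ▸ hθp)
    simp [h1, h2]
  right
  by_cases h2 : p = ∞
  · left
    refine ⟨h1, h2, ?_⟩
    simp [h1, h2, ENNReal.top_div_of_ne_top h1]
  right
  by_cases h3 : p = θ
  · left
    refine ⟨h1, h3, ?_⟩
    simp [h1, h3, ENNReal.div_self hθ0.ne' h1, ENNReal.mul_top hθ0.ne']
  right
  have h4 : θ < p := lt_of_le_of_ne hθp (Ne.symm h3)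
  have hp0 : 0 < p := hθ0.trans h4
  have e : (p / θ)⁻¹ = θ / p := ENNReal.inv_div (Or.inl h1) (Or.inl hθ0.ne')
  have hlt : θ / p < 1 := by
    rw [ENNReal.div_lt_iff (Or.inl hp0.ne') (Or.inl h2)]; simpa using h4
  have hne : 1 - θ / p ≠ 0 := (tsub_pos_of_lt hlt).ne'
  simp only [h1, h2, and_self, if_false, e]
  have hT : θ.toReal < p.toReal := (ENNReal.toReal_lt_toReal h1 h2).2 h4
  have hT0 : 0 < θ.toReal := ENNReal.toReal_pos hθ0.ne' h1
  refine ⟨h1, h2, h4, ?_, ?_, ?_⟩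
  · exact ENNReal.mul_ne_top h1 (ENNReal.inv_ne_top.2 hne)
  · exact mul_ne_zero hθ0.ne' (ENNReal.inv_ne_zero.2 (ENNReal.sub_ne_top ENNReal.one_ne_top))
  · rw [ENNReal.toReal_mul, ENNReal.toReal_inv, ENNReal.toReal_sub_of_le hlt.le ENNReal.one_ne_top,
      ENNReal.toReal_div, ENNReal.toReal_one]
    have : p.toReal - θ.toReal ≠ 0 := by linarith
    have hp' : p.toReal ≠ 0 := by linarith
    field_simp
    ring

theorem ts_sigma_inv {p θ : ℝ≥0∞} (hθ0 : 0 < θ) (hθp : θ ≤ p) :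
    1 / θ.toReal = 1 / p.toReal + 1 / (θ * conjE (pTheta p θ)).toReal := by
  rcases ts_sigma hθ0 hθp with ⟨h1, h2, h3⟩ | ⟨h1, h2, h3⟩ | ⟨h1, h2, h3⟩ | ⟨_, _, _, _, _, h3⟩
  · rw [h3, h1, h2]; simp
  · rw [h3, h2]; simp
  · rw [h3, h2]; simp
  · exact h3

theorem ts_sigma_pos {p θ : ℝ≥0∞} (hθ0 : 0 < θ) (hθp : θ ≤ p) :
    0 < θ * conjE (pTheta p θ) := by
  rcases ts_sigma hθ0 hθp with ⟨h1, h2, h3⟩ | ⟨h1, h2, h3⟩ | ⟨h1, h2, h3⟩ | ⟨_, _, _, _, h3, _⟩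
  · rw [h3]; simp
  · rwa [h3]
  · rw [h3]; simp
  · exact pos_iff_ne_zero.2 h3

theorem ts_holder {ι : Type*} {p θ : ℝ≥0∞} (hθ0 : 0 < θ) (hθp : θ ≤ p) (t x : ι → ℝ≥0∞)
    (ht0 : ∀ i, t i ≠ 0) (ht : ∀ i, t i ≠ ∞) :
    lqNorm θ x ≤ lqNorm p (fun i => t i * x i) *
      lqNorm (θ * conjE (pTheta p θ)) (fun i => (t i)⁻¹) := by
  have hx : ∀ i, x i = (t i * x i) * (t i)⁻¹ := fun i => by
    rw [mul_comm (t i), mul_assoc, ENNReal.mul_inv_cancel (ht0 i) (ht i), mul_one]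
  have hp : 0 < p := hθ0.trans_le hθp
  have hσ := ts_sigma_pos hθ0 hθp
  rcases ts_sigma hθ0 hθp with ⟨h1, h2, h3⟩ | ⟨h1, h2, h3⟩ | ⟨h1, h2, h3⟩ | ⟨h1, h2, h3, h4, h5, h6⟩
  · rw [lqNorm, if_pos h1]
    refine iSup_le fun i => ?_
    rw [hx i]
    exact mul_le_mul' (ts_le_lq hp (fun i => t i * x i) i) (ts_le_lq hσ (fun i => (t i)⁻¹) i)
  · rw [h3, ← ts_lq_const_mul hθ0]
    refine ts_lq_mono fun i => ?_
    conv_lhs => rw [hx i]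
    gcongr
    exact ts_le_lq hp (fun i => t i * x i) i
  · rw [h3, h2, mul_comm, ← ts_lq_const_mul hθ0]
    refine ts_lq_mono fun i => ?_
    conv_lhs => rw [hx i, mul_comm]
    gcongr
    exact ts_le_lq (by simp) (fun i => (t i)⁻¹) i
  · have hT0 : 0 < θ.toReal := ENNReal.toReal_pos hθ0.ne' h1
    have hT : θ.toReal < p.toReal := (ENNReal.toReal_lt_toReal h1 h2).2 h3
    let _ : MeasurableSpace ι := ⊤
    have := ENNReal.lintegral_Lp_mul_le_Lq_mul_Lr hT0 hT h6 (Measure.count : Measure ι)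
      (f := fun i => t i * x i) (g := fun i => (t i)⁻¹) measurable_from_top.aemeasurable
      measurable_from_top.aemeasurable
    simp only [lintegral_count, Pi.mul_apply, ← hx] at this
    simpa only [lqNorm, if_neg h1, if_neg h2, if_neg h4] using this

/-! ### Geometry of dyadic cubes -/

theorem ts_cube_pi (n k : ℕ) (m : Fin n → ℤ) : dyadicCube n k m =
    Set.univ.pi fun i => Set.Ioo ((m i : ℝ) / 2 ^ k) (((m i : ℝ) + 1) / 2 ^ k) := by
  ext x; simp [dyadicCube, Set.mem_pi]

theorem ts_half_pi (n k : ℕ) (m : Fin n → ℤ) : dyadicCubeHalf n k m =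
    Set.univ.pi fun i => Set.Ico ((m i : ℝ) / 2 ^ k) (((m i : ℝ) + 1) / 2 ^ k) := by
  ext x; simp [dyadicCubeHalf, Set.mem_pi]

theorem ts_half_meas (n k : ℕ) (m : Fin n → ℤ) : MeasurableSet (dyadicCubeHalf n k m) := by
  rw [ts_half_pi]; exact MeasurableSet.univ_pi fun i => measurableSet_Ico

theorem ts_restrict (n k : ℕ) (m : Fin n → ℤ) :
    (volume : Measure (Rn n)).restrict (dyadicCube n k m) =
      volume.restrict (dyadicCubeHalf n k m) := by
  apply Measure.restrict_congr_set
  rw [ts_half_pi, ts_cube_pi]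
  exact (Measure.univ_pi_Ioo_ae_eq_Icc (μ := fun _ => volume)).trans
    (Measure.univ_pi_Ico_ae_eq_Icc (μ := fun _ => volume)).symm

theorem ts_half_vol (n k : ℕ) (m : Fin n → ℤ) :
    (volume : Measure (Rn n)) (dyadicCubeHalf n k m) = (2 : ℝ≥0∞) ^ (-((k * n : ℕ) : ℝ)) := by
  rw [← Measure.restrict_apply_univ, ← ts_restrict, Measure.restrict_apply_univ, ts_cube_pi,
    Real.volume_pi_Ioo]
  have : ∀ i : Fin n, ENNReal.ofReal (((m i : ℝ) + 1) / 2 ^ k - (m i : ℝ) / 2 ^ k) =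
      ((2 : ℝ≥0∞) ^ k)⁻¹ := by
    intro i
    have : ((m i : ℝ) + 1) / 2 ^ k - (m i : ℝ) / 2 ^ k = ((2 : ℝ) ^ k)⁻¹ := by ring
    rw [this, ENNReal.ofReal_inv_of_pos (by positivity), ENNReal.ofReal_pow (by norm_num)]
    simp
  simp only [this]
  rw [Finset.prod_const, Finset.card_univ, Fintype.card_fin, ENNReal.rpow_neg,
    ENNReal.rpow_natCast, pow_mul]
  simp only [ENNReal.inv_pow]

theorem ts_mem_half (n k : ℕ) (m : Fin n → ℤ) (x : Rn n) :
    x ∈ dyadicCubeHalf n k m ↔ ∀ i, ⌊x i * 2 ^ k⌋ = m i := by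
  have h2 : (0 : ℝ) < 2 ^ k := by positivity
  simp only [dyadicCubeHalf, Set.mem_ofPred_eq, Int.floor_eq_iff, div_le_iff₀ h2, lt_div_iff₀ h2]

/-- The index of the level-`k` parent, `d = j - k`. -/
def tsPar (n d : ℕ) (m : Fin n → ℤ) : Fin n → ℤ := fun i => m i / ((2 ^ d : ℕ) : ℤ)

theorem ts_par_mem (n k d : ℕ) (m : Fin n → ℤ) (x : Rn n)
    (hx : x ∈ dyadicCubeHalf n (k + d) m) : x ∈ dyadicCubeHalf n k (tsPar n d m) := by
  rw [ts_mem_half] at hx ⊢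
  intro i
  rw [tsPar, ← hx i, ← Int.floor_div_natCast]
  congr 1
  push_cast
  rw [pow_add]
  field_simp

theorem ts_half_subset (n k d : ℕ) (m : Fin n → ℤ) (i : {i // tsPar n d i = m}) :
    dyadicCubeHalf n (k + d) i.1 ⊆ dyadicCubeHalf n k m := by
  intro x hx
  have := ts_par_mem n k d _ x hx
  rwa [i.2] at this

theorem ts_half_cover (n k d : ℕ) (m : Fin n → ℤ) :
    dyadicCubeHalf n k m ⊆ ⋃ i : {i // tsPar n d i = m}, dyadicCubeHalf n (k + d) i.1 := by
  intro x hx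
  have h1 : x ∈ dyadicCubeHalf n (k + d) (fun i => ⌊x i * 2 ^ (k + d)⌋) :=
    (ts_mem_half _ _ _ _).2 fun i => rfl
  have h2 := ts_par_mem n k d _ x h1
  rw [ts_mem_half] at hx h2
  refine Set.mem_iUnion.2 ⟨⟨_, ?_⟩, h1⟩
  funext i
  exact (h2 i).symm.trans (hx i)

theorem ts_half_disj (n k : ℕ) {m m' : Fin n → ℤ} (h : m ≠ m') :
    Disjoint (dyadicCubeHalf n k m) (dyadicCubeHalf n k m') := by
  rw [Set.disjoint_left]
  intro x h1 h2
  rw [ts_mem_half] at h1 h2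
  exact h (funext fun i => by rw [← h1 i, h2 i])

theorem ts_tbar (n : ℕ) (p : ℝ≥0∞) (T : ℕ → (Fin n → ℤ) → ℝ≥0∞) (k : ℕ) (m : Fin n → ℤ)
    (x : Rn n) (hx : x ∈ dyadicCubeHalf n k m) :
    tbarOf n p T k x = (2 : ℝ≥0∞) ^ (((k * n : ℕ) : ℝ) / p.toReal) * T k m := by
  unfold tbarOf
  congr 1
  rw [tsum_eq_single m, Set.indicator_of_mem hx]
  intro m' hm'
  exact Set.indicator_of_notMem (fun h => Set.disjoint_left.1 (ts_half_disj n k hm') h hx) _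

/-! ### The main local estimates -/

theorem ts_avg (n k d : ℕ) {σ : ℝ≥0∞} (hσ : 0 < σ) (m : Fin n → ℤ) (f : Rn n → ℝ≥0∞)
    (c : {i // tsPar n d i = m} → ℝ≥0∞)
    (hf : ∀ i : {i // tsPar n d i = m}, ∀ x ∈ dyadicCubeHalf n (k + d) i.1, f x = c i) :
    lqNorm σ c ≤ (2 : ℝ≥0∞) ^ (((d * n : ℕ) : ℝ) / σ.toReal) *
      avgNorm n k σ (dyadicCube n k m) f := by
  unfold lqNorm avgNorm
  rw [ts_restrict]
  by_cases h : σ = ∞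
  · simp only [if_pos h]
    rw [h]
    simp only [ENNReal.toReal_top, _root_.div_zero, ENNReal.rpow_zero, one_mul]
    refine iSup_le fun i => ?_
    have h1 := ENNReal.ae_le_essSup (μ := volume.restrict (dyadicCubeHalf n k m)) f
    have h2 := ae_restrict_of_ae_restrict_of_subset (ts_half_subset n k d m i) h1
    have h3 := ae_restrict_mem (μ := (volume : Measure (Rn n))) (ts_half_meas n (k + d) i.1)
    have hne : (volume : Measure (Rn n)).restrict (dyadicCubeHalf n (k + d) i.1) ≠ 0 := by
      rw [Ne, Measure.restrict_eq_zero, ts_half_vol]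
      simp [ENNReal.rpow_eq_zero_iff]
    have : (ae ((volume : Measure (Rn n)).restrict (dyadicCubeHalf n (k + d) i.1))).NeBot :=
      ae_neBot.2 hne
    obtain ⟨x, hx1, hx2⟩ := (h2.and h3).exists
    rwa [hf i x hx2] at hx1
  · have h0 : 0 < σ.toReal := ENNReal.toReal_pos hσ.ne' h
    simp only [if_neg h]
    have e1 : ((d * n : ℕ) : ℝ) / σ.toReal = ((d * n : ℕ) : ℝ) * (1 / σ.toReal) := by ring
    rw [e1, ENNReal.rpow_mul, ← ENNReal.mul_rpow_of_nonneg _ _ (by positivity)]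
    refine ENNReal.rpow_le_rpow ?_ (by positivity)
    have e2 : ∀ i : {i // tsPar n d i = m}, c i ^ σ.toReal = (2 : ℝ≥0∞) ^ (((k + d) * n : ℕ) : ℝ) *
        ∫⁻ x in dyadicCubeHalf n (k + d) i.1, f x ^ σ.toReal := by
      intro i
      have : ∫⁻ x in dyadicCubeHalf n (k + d) i.1, f x ^ σ.toReal =
          ∫⁻ x in dyadicCubeHalf n (k + d) i.1, c i ^ σ.toReal := by
        refine setLIntegral_congr_fun (ts_half_meas _ _ _) fun x hx => ?_
        simp only [hf i x hx]
      rw [this, setLIntegral_const, ts_half_vol, mul_comm, mul_assoc,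
        ← ENNReal.rpow_add _ _ (by simp) (by simp)]
      simp
    simp only [e2]
    rw [ENNReal.tsum_mul_left, ← lintegral_iUnion (fun i => ts_half_meas _ _ _)
      (fun i j hij => ts_half_disj n (k + d) fun h => hij (Subtype.ext h))]
    rw [← mul_assoc]
    refine mul_le_mul' (le_of_eq ?_) (lintegral_mono_set ?_)
    · rw [ENNReal.rpow_natCast, ENNReal.rpow_natCast, ← pow_add]
      congr 1; ring
    · exact Set.iUnion_subset fun i => ts_half_subset n k d m i

theorem ts_avg_p (n k : ℕ) {p : ℝ≥0∞} (hp : 0 < p) (T : ℕ → (Fin n → ℤ) → ℝ≥0∞)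
    (m : Fin n → ℤ) :
    (2 : ℝ≥0∞) ^ (((k * n : ℕ) : ℝ) / p.toReal) * T k m ≤
      avgNorm n k p (dyadicCube n k m) (tbarOf n p T k) := by
  have h := ts_avg n k 0 hp m (tbarOf n p T k)
    (fun i => (2 : ℝ≥0∞) ^ (((k * n : ℕ) : ℝ) / p.toReal) * T k i.1)
    (fun i x hx => ts_tbar n p T k i.1 x hx)
  simp only [Nat.zero_mul, Nat.cast_zero, zero_div, ENNReal.rpow_zero, one_mul] at h
  refine le_trans ?_ h
  have hm : tsPar n 0 m = m := by funext i; simp [tsPar]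
  exact ts_le_lq hp (fun i : {i // tsPar n 0 i = m} =>
    (2 : ℝ≥0∞) ^ (((k * n : ℕ) : ℝ) / p.toReal) * T k i.1) ⟨m, hm⟩

theorem ts_two_ne_zero (a : ℝ) : (2 : ℝ≥0∞) ^ a ≠ 0 := by
  simp [ENNReal.rpow_eq_zero_iff]

theorem ts_two_ne_top (a : ℝ) : (2 : ℝ≥0∞) ^ a ≠ ∞ := by
  simp [ENNReal.rpow_eq_top_iff]

theorem ts_two_add (a b : ℝ) : (2 : ℝ≥0∞) ^ (a + b) = 2 ^ a * 2 ^ b :=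
  ENNReal.rpow_add _ _ (by simp) (by simp)

theorem ts_avg_sigma (n k d : ℕ) {p σ : ℝ≥0∞} (hσ : 0 < σ) (T : ℕ → (Fin n → ℤ) → ℝ≥0∞)
    (m : Fin n → ℤ) :
    lqNorm σ (fun i : {i // tsPar n d i = m} => (T (k + d) i.1)⁻¹) ≤
      (2 : ℝ≥0∞) ^ ((((k + d) * n : ℕ) : ℝ) / p.toReal) *
      ((2 : ℝ≥0∞) ^ (((d * n : ℕ) : ℝ) / σ.toReal) *
        avgNorm n k σ (dyadicCube n k m) (fun x => (tbarOf n p T (k + d) x)⁻¹)) := by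
  have h := ts_avg n k d hσ m (fun x => (tbarOf n p T (k + d) x)⁻¹)
    (fun i => ((2 : ℝ≥0∞) ^ ((((k + d) * n : ℕ) : ℝ) / p.toReal) * T (k + d) i.1)⁻¹)
    (fun i x hx => by rw [ts_tbar n p T (k + d) i.1 x hx])
  refine le_trans ?_ (mul_le_mul_right h _)
  rw [← ts_lq_const_mul hσ]
  refine ts_lq_mono fun i => ?_
  rw [ENNReal.mul_inv (Or.inl (ts_two_ne_zero _)) (Or.inl (ts_two_ne_top _)), ← mul_assoc,
    ENNReal.mul_inv_cancel (ts_two_ne_zero _) (ts_two_ne_top _), one_mul]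

theorem ts_main (n : ℕ) {p r θ : ℝ≥0∞} (hθ0 : 0 < θ) (hθp : θ ≤ p) (hθr : θ ≤ r)
    (α₁ : ℝ) (T : ℕ → (Fin n → ℤ) → ℝ≥0∞) (hT0 : ∀ k m, T k m ≠ 0) (hT : ∀ k m, T k m ≠ ∞)
    (C₁ : ℝ≥0∞)
    (hC : ∀ k j : ℕ, k ≤ j → ∀ m : Fin n → ℤ,
      avgNorm n k p (dyadicCube n k m) (tbarOf n p T k) *
        avgNorm n k (θ * conjE (pTheta p θ)) (dyadicCube n k m) (fun x => (tbarOf n p T j x)⁻¹) ≤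
      C₁ * (2 : ℝ≥0∞) ^ (α₁ * ((k : ℝ) - (j : ℝ))))
    (v : Rn n → ℝ) (k d : ℕ) :
    lqNorm p (fun m : Fin n → ℤ => (2 : ℝ≥0∞) ^ (((k * n : ℕ) : ℝ) / r.toReal) * T k m *
        eLpNorm v r (volume.restrict (dyadicCube n k m))) ≤
      (C₁ * (2 : ℝ≥0∞) ^ (-(α₁ * d))) *
        lqNorm p (fun m : Fin n → ℤ => (2 : ℝ≥0∞) ^ ((((k + d) * n : ℕ) : ℝ) / θ.toReal) *
          T (k + d) m * eLpNorm v r (volume.restrict (dyadicCube n (k + d) m))) := by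
  have hp : 0 < p := hθ0.trans_le hθp
  have hr : 0 < r := hθ0.trans_le hθr
  have hσ := ts_sigma_pos hθ0 hθp
  set σ := θ * conjE (pTheta p θ) with hσdef
  have hinv : 1 / θ.toReal = 1 / p.toReal + 1 / σ.toReal := ts_sigma_inv hθ0 hθp
  have hrθ : 1 / r.toReal ≤ 1 / θ.toReal := by
    by_cases h : r = ∞
    · rw [h]; simp
    · exact one_div_le_one_div_of_le
        (ENNReal.toReal_pos hθ0.ne' (ne_top_of_le_ne_top h hθr)) (ENNReal.toReal_mono h hθr)
  set N : ℕ → (Fin n → ℤ) → ℝ≥0∞ :=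
    fun k m => eLpNorm v r (volume.restrict (dyadicCube n k m)) with hN
  -- pointwise estimate
  have hpt : ∀ m : Fin n → ℤ, (2 : ℝ≥0∞) ^ (((k * n : ℕ) : ℝ) / r.toReal) * T k m * N k m ≤
      (C₁ * (2 : ℝ≥0∞) ^ (-(α₁ * d))) * lqNorm p (fun i : {i // tsPar n d i = m} =>
        (2 : ℝ≥0∞) ^ ((((k + d) * n : ℕ) : ℝ) / θ.toReal) * T (k + d) i.1 * N (k + d) i.1) := by
    intro m
    have s1 : N k m ≤ lqNorm θ (fun i : {i // tsPar n d i = m} => N (k + d) i.1) := by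
      simp only [hN, ts_restrict, ts_eLpNorm_eq hr]
      exact ts_lp_cover hθ0 hθr _ _ (ts_half_cover n k d m) _
    have s2 := ts_holder hθ0 hθp (fun i : {i // tsPar n d i = m} => T (k + d) i.1)
      (fun i => N (k + d) i.1) (fun i => hT0 _ _) (fun i => hT _ _)
    have s3 := ts_avg_sigma n k d (p := p) hσ T m
    have s4 := ts_avg_p n k hp T m
    have s5 := hC k (k + d) (Nat.le_add_right _ _) m
    have hlq : lqNorm p (fun i : {i // tsPar n d i = m} =>
        (2 : ℝ≥0∞) ^ ((((k + d) * n : ℕ) : ℝ) / θ.toReal) * T (k + d) i.1 * N (k + d) i.1) =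
        (2 : ℝ≥0∞) ^ ((((k + d) * n : ℕ) : ℝ) / θ.toReal) *
        lqNorm p (fun i : {i // tsPar n d i = m} => T (k + d) i.1 * N (k + d) i.1) := by
      rw [← ts_lq_const_mul hp]; simp only [mul_assoc]
    rw [hlq]
    set L := lqNorm p (fun i : {i // tsPar n d i = m} => T (k + d) i.1 * N (k + d) i.1)
    set S := lqNorm σ (fun i : {i // tsPar n d i = m} => (T (k + d) i.1)⁻¹)
    set a := avgNorm n k p (dyadicCube n k m) (tbarOf n p T k)
    set b := avgNorm n k σ (dyadicCube n k m) (fun x => (tbarOf n p T (k + d) x)⁻¹)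
    have s6 : T k m ≤ (2 : ℝ≥0∞) ^ (-(((k * n : ℕ) : ℝ) / p.toReal)) * a := by
      refine le_trans (le_of_eq ?_) (mul_le_mul_right s4 _)
      rw [← mul_assoc, ← ts_two_add]; simp
    have s7 : α₁ * ((k : ℝ) - ((k + d : ℕ) : ℝ)) = -(α₁ * d) := by push_cast; ring
    rw [s7] at s5
    calc (2 : ℝ≥0∞) ^ (((k * n : ℕ) : ℝ) / r.toReal) * T k m * N k m
        ≤ (2 : ℝ≥0∞) ^ (((k * n : ℕ) : ℝ) / r.toReal) *
          ((2 : ℝ≥0∞) ^ (-(((k * n : ℕ) : ℝ) / p.toReal)) * a) *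
          (L * ((2 : ℝ≥0∞) ^ ((((k + d) * n : ℕ) : ℝ) / p.toReal) *
            ((2 : ℝ≥0∞) ^ (((d * n : ℕ) : ℝ) / σ.toReal) * b))) := by
          refine mul_le_mul' (mul_le_mul' le_rfl s6) ?_
          exact (s1.trans s2).trans (mul_le_mul' le_rfl s3)
      _ = (a * b) * (2 : ℝ≥0∞) ^ (((k * n : ℕ) : ℝ) / r.toReal + -(((k * n : ℕ) : ℝ) / p.toReal) +
            (((k + d) * n : ℕ) : ℝ) / p.toReal + ((d * n : ℕ) : ℝ) / σ.toReal) * L := by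
          simp only [ts_two_add]; ring
      _ ≤ (C₁ * (2 : ℝ≥0∞) ^ (-(α₁ * d))) *
            (2 : ℝ≥0∞) ^ ((((k + d) * n : ℕ) : ℝ) / θ.toReal) * L := by
          refine mul_le_mul' (mul_le_mul' s5 ?_) le_rfl
          refine ENNReal.rpow_le_rpow_of_exponent_le (by norm_num) ?_
          have hkn : (0 : ℝ) ≤ (k : ℝ) * n := by positivity
          have := mul_le_mul_of_nonneg_left hrθ hkn
          push_cast
          simp only [one_div] at this hinv
          simp only [div_eq_mul_inv]
          rw [hinv] at this ⊢
          nlinarith [this]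
      _ = _ := by ring
  refine (ts_lq_mono hpt).trans ?_
  rw [ts_lq_const_mul hp]
  exact mul_le_mul' le_rfl (ts_lq_fiber hp (tsPar n d) (fun m : Fin n → ℤ =>
    (2 : ℝ≥0∞) ^ ((((k + d) * n : ℕ) : ℝ) / θ.toReal) * T (k + d) m * N (k + d) m))

theorem ts_rpow_finset {ρ : ℝ} (hρ : 0 < ρ) (hρ1 : ρ ≤ 1) (f : ℕ → ℝ≥0∞) (N : ℕ) :
    (∑ i ∈ Finset.range N, f i) ^ ρ ≤ ∑ i ∈ Finset.range N, f i ^ ρ := by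
  induction N with
  | zero => simp [hρ]
  | succ N ih =>
    simp only [Finset.sum_range_succ]
    exact (ENNReal.rpow_add_le_add_rpow _ _ hρ.le hρ1).trans (by gcongr)

theorem ts_rpow_tsum {ρ : ℝ} (hρ : 0 < ρ) (hρ1 : ρ ≤ 1) (f : ℕ → ℝ≥0∞) :
    (∑' i, f i) ^ ρ ≤ ∑' i, f i ^ ρ := by
  have h1 : Tendsto (fun N => (∑ i ∈ Finset.range N, f i) ^ ρ) atTop
      (nhds ((∑' i, f i) ^ ρ)) :=
    (ENNReal.continuous_rpow_const.tendsto _).comp (ENNReal.tendsto_nat_tsum f)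
  exact le_of_tendsto' h1 fun N => (ts_rpow_finset hρ hρ1 f N).trans (ENNReal.sum_le_tsum _)

/-- A compact set is covered by finitely many unit cubes. -/
theorem ts_compact_cover (n : ℕ) (K : Set (Rn n)) (hK : IsCompact K) :
    ∃ F : Finset (Fin n → ℤ), K ⊆ ⋃ m : F, dyadicCubeHalf n 0 m.1 := by
  obtain ⟨R, hR⟩ := hK.isBounded.exists_norm_le
  refine ⟨Fintype.piFinset fun _ => Finset.Icc (-⌈R⌉ - 1) ⌈R⌉, fun x hx => ?_⟩
  refine Set.mem_iUnion.2 ⟨⟨fun i => ⌊x i⌋, ?_⟩, ?_⟩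
  · rw [Fintype.mem_piFinset]
    intro i
    have h1 : |x i| ≤ R := (norm_le_pi_norm x i).trans (hR x hx)
    have h2 := abs_le.1 h1
    rw [Finset.mem_Icc]
    constructor
    · rw [Int.le_floor]; push_cast; linarith [Int.le_ceil R]
    · exact (Int.floor_mono h2.2).trans (Int.floor_le_ceil R)
  · rw [ts_mem_half]; intro i; simp

theorem ts_vseq_sum {n : ℕ} (V : ℕ → Rn n → ℝ) (k : ℕ) (x : Rn n) :
    ∑ i ∈ Finset.range (k + 1), vseq V i x = V k x := by
  induction k with
  | zero => simp [vseq]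
  | succ k ih => rw [Finset.sum_range_succ, ih]; simp [vseq]

theorem ts_vseq_meas {n : ℕ} (V : ℕ → Rn n → ℝ) (hV : ∀ k, Measurable (V k)) (k : ℕ) :
    Measurable (vseq V k) := by
  unfold vseq
  split_ifs with h
  · exact hV 0
  · exact (hV k).sub (hV (k - 1))

/-- `|φ - Σ_{k<N} v_k| ≤ Σ_{k ≥ N} |v_k|`. -/
theorem ts_tail (v : ℕ → ℝ) (φ : ℝ)
    (h : Tendsto (fun N => ∑ k ∈ Finset.range N, v k) atTop (nhds φ)) (N : ℕ) :
    ‖φ - ∑ k ∈ Finset.range N, v k‖ₑ ≤ ∑' i, ‖v (i + N)‖ₑ := by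
  have h1 : Tendsto (fun M => ‖(∑ k ∈ Finset.range (M + N), v k) - ∑ k ∈ Finset.range N, v k‖ₑ)
      atTop (nhds ‖φ - ∑ k ∈ Finset.range N, v k‖ₑ) :=
    (((tendsto_add_atTop_iff_nat N).2 h).sub_const _).enorm
  refine le_of_tendsto' h1 fun M => ?_
  have : (∑ k ∈ Finset.range (M + N), v k) - ∑ k ∈ Finset.range N, v k =
      ∑ i ∈ Finset.range M, v (i + N) := by
    rw [add_comm M N, Finset.sum_range_add]
    simp [add_comm]
  rw [this]
  exact (enorm_sum_le _ _).trans (ENNReal.sum_le_tsum (f := fun i => ‖v (i + N)‖ₑ) _)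

/-- Tail estimate in `L_r`. -/
theorem ts_tail_Lr {n : ℕ} {r : ℝ≥0∞} (hr : 0 < r) {ρ : ℝ} (hρ : 0 < ρ) (hρ1 : ρ ≤ 1)
    (hρr : ENNReal.ofReal ρ ≤ r) (v : ℕ → Rn n → ℝ) (hv : ∀ k, Measurable (v k)) (φ : Rn n → ℝ)
    (h : ∀ᵐ x : Rn n, Tendsto (fun N => ∑ k ∈ Finset.range N, v k x) atTop (nhds (φ x)))
    (S : Set (Rn n)) (N : ℕ) :
    eLpNorm (fun x => φ x - ∑ k ∈ Finset.range N, v k x) r (volume.restrict S) ^ ρ ≤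
      ∑' i, eLpNorm (v (i + N)) r (volume.restrict S) ^ ρ := by
  simp only [ts_eLpNorm_eq hr]
  refine ts_lp_rho hρ hρr _ _ (fun i => (hv _).enorm.aemeasurable) ?_
  filter_upwards [ae_restrict_of_ae h] with x hx
  exact (ENNReal.rpow_le_rpow (ts_tail _ _ hx N) hρ.le).trans (ts_rpow_tsum hρ hρ1 _)

/-- A.e. convergence from the summability of local quasinorms. -/
theorem ts_ae_conv {n : ℕ} {r : ℝ≥0∞} (hr : 0 < r) {ρ : ℝ} (hρ : 0 < ρ) (hρ1 : ρ ≤ 1)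
    (hρr : ENNReal.ofReal ρ ≤ r) (v : ℕ → Rn n → ℝ) (hv : ∀ k, Measurable (v k))
    (hs : ∀ m : Fin n → ℤ,
      ∑' i, eLpNorm (v i) r (volume.restrict (dyadicCube n 0 m)) ^ ρ ≠ ∞) :
    ∃ φ : Rn n → ℝ, Measurable φ ∧
      ∀ᵐ x : Rn n, Tendsto (fun N => ∑ k ∈ Finset.range N, v k x) atTop (nhds (φ x)) := by
  refine measurable_limit_of_tendsto_metrizable_ae
    (fun N => (Finset.measurable_fun_sum _ fun i _ => hv i).aemeasurable) ?_
  have huniv : (⋃ m : Fin n → ℤ, dyadicCubeHalf n 0 m) = Set.univ := by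
    refine Set.eq_univ_of_forall fun x => Set.mem_iUnion.2 ⟨fun i => ⌊x i * 2 ^ 0⌋, ?_⟩
    rw [ts_mem_half]; intro i; rfl
  rw [← Measure.restrict_univ (μ := (volume : Measure (Rn n))), ← huniv, ae_restrict_iUnion_iff]
  intro m
  rw [← ts_restrict]
  set μ := (volume : Measure (Rn n)).restrict (dyadicCube n 0 m)
  have hmeas : Measurable fun x => ∑' i, ‖v i x‖ₑ := Measurable.tsum fun i => (hv i).enorm
  have h1 : lpNormE r μ (fun x => ∑' i, ‖v i x‖ₑ) ^ ρ ≤ ∑' i, eLpNorm (v i) r μ ^ ρ := by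
    simp only [ts_eLpNorm_eq hr]
    exact ts_lp_rho hρ hρr _ _ (fun i => (hv _).enorm.aemeasurable)
      (Eventually.of_forall fun x => ts_rpow_tsum hρ hρ1 _)
  have h2 : lpNormE r μ (fun x => ∑' i, ‖v i x‖ₑ) ≠ ∞ := by
    intro h
    rw [h, ENNReal.top_rpow_of_pos hρ] at h1
    exact hs m (top_le_iff.1 h1)
  have h3 : ∀ᵐ x ∂μ, ∑' i, ‖v i x‖ₑ ≠ ∞ := by
    unfold lpNormE at h2
    split_ifs at h2 with h
    · filter_upwards [ENNReal.ae_le_essSup (μ := μ) (fun x => ∑' i, ‖v i x‖ₑ)] with x hx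
      exact ne_top_of_le_ne_top h2 hx
    · have h0 : 0 < r.toReal := ENNReal.toReal_pos hr.ne' h
      have h4 : ∫⁻ x, (∑' i, ‖v i x‖ₑ) ^ r.toReal ∂μ ≠ ∞ := by
        intro h5
        rw [h5, ENNReal.top_rpow_of_pos (by positivity)] at h2
        exact h2 rfl
      filter_upwards [ae_lt_top (hmeas.pow_const _) h4] with x hx h6
      rw [h6, ENNReal.top_rpow_of_pos h0] at hx
      exact lt_irrefl _ hx
  filter_upwards [h3] with x hx
  have hsum : Summable fun i => v i x := by
    apply Summable.of_norm
    have := ENNReal.summable_toReal hx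
    simpa using this
  exact ⟨_, hsum.hasSum.tendsto_sum_nat⟩

theorem ts_geom {C₁ : ℝ≥0∞} (hC0 : 0 < C₁) (hC : C₁ < ∞) {α ρ : ℝ} (hα : 0 < α) (hρ : 0 < ρ) :
    ∑' i : ℕ, (C₁ * (2 : ℝ≥0∞) ^ (-(α * i))) ^ ρ ≠ ∞ ∧
    ∑' i : ℕ, (C₁ * (2 : ℝ≥0∞) ^ (-(α * i))) ^ ρ ≠ 0 := by
  constructor
  · have h1 : ∀ i : ℕ, (C₁ * (2 : ℝ≥0∞) ^ (-(α * i))) ^ ρ =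
        C₁ ^ ρ * ((2 : ℝ≥0∞) ^ (-(α * ρ))) ^ i := by
      intro i
      rw [ENNReal.mul_rpow_of_nonneg _ _ hρ.le, ← ENNReal.rpow_mul, ← ENNReal.rpow_natCast,
        ← ENNReal.rpow_mul]
      congr 2; ring
    simp only [h1]
    rw [ENNReal.tsum_mul_left, ENNReal.tsum_geometric]
    refine ENNReal.mul_ne_top (ENNReal.rpow_ne_top_of_nonneg hρ.le hC.ne) ?_
    rw [ENNReal.inv_ne_top]
    refine (tsub_pos_of_lt ?_).ne'
    exact ENNReal.rpow_lt_one_of_one_lt_of_neg (by norm_num) (by simp; positivity)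
  · intro h
    rw [ENNReal.tsum_eq_zero] at h
    have := h 0
    simp [ENNReal.rpow_eq_zero_iff] at this
    rcases this with h | h
    · exact hC0.ne' h.1
    · linarith [h.2]

/-- **Theorem 4.3: convergence of telescoping series and the corresponding estimate.** -/
theorem telescoping_series (n : ℕ) (hn : 0 < n) (p q r θ : ℝ≥0∞)
    (hp : 0 < p) (hq : 0 < q) (hr : 0 < r)
    (hθ0 : 0 < θ) (hθp : θ ≤ p) (hθr : θ ≤ r)
    (α₁ α₂ α₃ : ℝ) (hα₃ : 0 ≤ α₃)
    (hα₁ : (n : ℝ) * (1 / θ.toReal - 1 / r.toReal) < α₁)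
    (σ₂ : ℝ≥0∞) (hσ₂ : 0 < σ₂) (t : ℕ → Rn n → ℝ)
    (ht : MemX n α₁ α₂ α₃ (θ * conjE (pTheta p θ)) σ₂ p t) :
    ∃ C : ℝ≥0∞, 0 < C ∧ C < ∞ ∧
      ∀ V : ℕ → Rn n → ℝ, (∀ k, MemLrLoc n r (V k)) →
        lqNorm q (fun k : ℕ => lqNorm p (fun m : Fin n → ℤ =>
            (2 : ℝ≥0∞) ^ (((k * n : ℕ) : ℝ) / θ.toReal) * tkm n p t k m *
              eLpNorm (vseq V k) r (volume.restrict (dyadicCube n k m)))) < ∞ →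
        ∃ φ : Rn n → ℝ, MemLrLoc n r φ ∧
          (∀ K : Set (Rn n), IsCompact K →
            Filter.Tendsto (fun N : ℕ =>
                eLpNorm (fun x => (∑ k ∈ Finset.range N, vseq V k x) - φ x) r
                  (volume.restrict K)) Filter.atTop (nhds 0)) ∧
          lqNorm q (fun k : ℕ => lqNorm p (fun m : Fin n → ℤ =>
              (2 : ℝ≥0∞) ^ (((k * n : ℕ) : ℝ) / r.toReal) * tkm n p t k m *
                eLpNorm (fun x => φ x - V k x) r (volume.restrict (dyadicCube n k m)))) +
            lqNorm p (fun m : Fin n → ℤ =>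
              tkm n p t 0 m * eLpNorm φ r (volume.restrict (dyadicCube n 0 m))) ≤
          C * lqNorm q (fun k : ℕ => lqNorm p (fun m : Fin n → ℤ =>
              (2 : ℝ≥0∞) ^ (((k * n : ℕ) : ℝ) / θ.toReal) * tkm n p t k m *
                eLpNorm (vseq V k) r (volume.restrict (dyadicCube n k m)))) := by
  obtain ⟨hadm, ⟨C₁, hC0, hCt, hC⟩, -, hpos⟩ := ht
  have hα : 0 < α₁ := by
    refine lt_of_le_of_lt ?_ hα₁
    have hrθ : 1 / r.toReal ≤ 1 / θ.toReal := by
      by_cases h : r = ∞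
      · rw [h]; simp
      · exact one_div_le_one_div_of_le
          (ENNReal.toReal_pos hθ0.ne' (ne_top_of_le_ne_top h hθr)) (ENNReal.toReal_mono h hθr)
    exact mul_nonneg (Nat.cast_nonneg n) (by linarith)
  set T := tkm n p t with hTdef
  have hT0 : ∀ k m, T k m ≠ 0 := fun k m => (hpos k m m (by simp)).1.ne'
  have hTt : ∀ k m, T k m ≠ ∞ := by
    intro k m
    have h1 := (hadm k).2.2 (Set.Icc (fun i => (m i : ℝ) / 2 ^ k)
      (fun i => ((m i : ℝ) + 1) / 2 ^ k)) isCompact_Icc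
    refine ne_top_of_le_ne_top h1.ne (eLpNorm_mono_measure _ (Measure.restrict_mono ?_ le_rfl))
    intro x hx
    exact ⟨fun i => (hx i).1.le, fun i => (hx i).2.le⟩
  -- the common exponent
  set ρ' : ℝ≥0∞ := min 1 (min p (min q r)) with hρ'
  have hρ't : ρ' ≠ ∞ := ne_top_of_le_ne_top ENNReal.one_ne_top (min_le_left _ _)
  have hρ'0 : 0 < ρ' := by simp [hρ', hp, hq, hr]
  set ρ := ρ'.toReal with hρdef
  have hρ : 0 < ρ := ENNReal.toReal_pos hρ'0.ne' hρ't
  have hofρ : ENNReal.ofReal ρ = ρ' := ENNReal.ofReal_toReal hρ't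
  have hρ1 : ρ ≤ 1 := by
    have := ENNReal.toReal_mono ENNReal.one_ne_top (min_le_left 1 (min p (min q r)))
    simpa using this
  have hρp : ENNReal.ofReal ρ ≤ p := by rw [hofρ]; simp [hρ']
  have hρq : ENNReal.ofReal ρ ≤ q := by rw [hofρ]; simp [hρ']
  have hρr : ENNReal.ofReal ρ ≤ r := by rw [hofρ]; simp [hρ']
  obtain ⟨hSt, hS0⟩ := ts_geom hC0 hCt hα hρ
  set w : ℕ → ℝ≥0∞ := fun i => C₁ * (2 : ℝ≥0∞) ^ (-(α₁ * i)) with hw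
  set S : ℝ≥0∞ := ∑' i : ℕ, w i ^ ρ with hS
  have hSr0 : S ^ (ρ⁻¹) ≠ 0 := by
    simp [ENNReal.rpow_eq_zero_iff, hS0, hSt]
  have hSrt : S ^ (ρ⁻¹) ≠ ∞ := ENNReal.rpow_ne_top_of_nonneg (by positivity) hSt
  refine ⟨S ^ (ρ⁻¹) + S ^ (ρ⁻¹), pos_iff_ne_zero.2 (by simp [hSr0]),
    lt_top_iff_ne_top.2 (by simp [hSrt]), ?_⟩
  intro V hV hA
  set a : ℕ → ℝ≥0∞ := fun k => lqNorm p (fun m : Fin n → ℤ =>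
    (2 : ℝ≥0∞) ^ (((k * n : ℕ) : ℝ) / θ.toReal) * T k m *
      eLpNorm (vseq V k) r (volume.restrict (dyadicCube n k m))) with ha
  set A := lqNorm q a with hAdef
  have hvm := ts_vseq_meas V (fun k => (hV k).1)
  have hmain : ∀ k d j : ℕ, j = k + d →
      lqNorm p (fun m : Fin n → ℤ => (2 : ℝ≥0∞) ^ (((k * n : ℕ) : ℝ) / r.toReal) * T k m *
        eLpNorm (vseq V j) r (volume.restrict (dyadicCube n k m))) ≤ w d * a j := by
    rintro k d j rfl
    exact ts_main n hθ0 hθp hθr α₁ T hT0 hTt C₁ hC (vseq V (k + d)) k d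
  have hmain0 : ∀ j : ℕ, lqNorm p (fun m : Fin n → ℤ => T 0 m *
        eLpNorm (vseq V j) r (volume.restrict (dyadicCube n 0 m))) ≤ w j * a j := by
    intro j
    have := hmain 0 j j (by simp)
    simpa using this
  have haA : ∀ j, a j ≤ A := fun j => ts_le_lq hq a j
  have hwA : ∑' j, (w j * A) ^ ρ = S * A ^ ρ := by
    simp only [ENNReal.mul_rpow_of_nonneg _ _ hρ.le]
    rw [ENNReal.tsum_mul_right]
  have hfin : (S * A ^ ρ) ≠ ∞ :=
    ENNReal.mul_ne_top hSt (ENNReal.rpow_ne_top_of_nonneg hρ.le hA.ne)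
  -- local summability
  have hloc : ∀ m : Fin n → ℤ,
      ∑' i, eLpNorm (vseq V i) r (volume.restrict (dyadicCube n 0 m)) ^ ρ ≠ ∞ := by
    intro m h
    have h1 : T 0 m ^ ρ * ∑' i, eLpNorm (vseq V i) r (volume.restrict (dyadicCube n 0 m)) ^ ρ ≤
        S * A ^ ρ := by
      rw [← ENNReal.tsum_mul_left, ← hwA]
      refine ENNReal.tsum_le_tsum fun j => ?_
      rw [← ENNReal.mul_rpow_of_nonneg _ _ hρ.le]
      refine ENNReal.rpow_le_rpow ?_ hρ.le
      refine le_trans ?_ ((hmain0 j).trans (mul_le_mul' le_rfl (haA j)))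
      exact ts_le_lq hp (fun m : Fin n → ℤ => T 0 m *
        eLpNorm (vseq V j) r (volume.restrict (dyadicCube n 0 m))) m
    rw [h, ENNReal.mul_top] at h1
    · exact hfin (top_le_iff.1 h1)
    · simp [ENNReal.rpow_eq_zero_iff, hT0, hTt]
  obtain ⟨φ, hφm, hφ⟩ := ts_ae_conv hr hρ hρ1 hρr (vseq V) hvm hloc
  have htail := fun S N => ts_tail_Lr hr hρ hρ1 hρr (vseq V) hvm φ hφ S N
  -- estimate on compact sets
  have hcpt : ∀ (K : Set (Rn n)) (F : Finset (Fin n → ℤ)),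
      K ⊆ (⋃ m : F, dyadicCubeHalf n 0 m.1) → ∀ g : Rn n → ℝ,
      eLpNorm g r (volume.restrict K) ≤
        (∑ m ∈ F, eLpNorm g r (volume.restrict (dyadicCube n 0 m)) ^ ρ) ^ (ρ⁻¹) := by
    intro K F hKF g
    have h1 := ts_lp_cover (μ := (volume : Measure (Rn n))) hρ'0 (hofρ ▸ hρr) K _ hKF
      (fun x => ‖g x‖ₑ)
    simp only [ts_eLpNorm_eq hr, ts_restrict]
    refine h1.trans (le_of_eq ?_)
    rw [lqNorm, if_neg hρ't, one_div, tsum_fintype, ← hρdef]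
    congr 1
    exact Finset.sum_coe_sort F
      (fun m => lpNormE r (volume.restrict (dyadicCubeHalf n 0 m)) (fun x => ‖g x‖ₑ) ^ ρ)
  refine ⟨φ, ⟨hφm, ?_⟩, ?_, ?_⟩
  · intro K hK
    obtain ⟨F, hF⟩ := ts_compact_cover n K hK
    refine lt_of_le_of_lt (hcpt K F hF φ) (lt_top_iff_ne_top.2 ?_)
    refine ENNReal.rpow_ne_top_of_nonneg (by positivity) ?_
    refine (ENNReal.sum_lt_top.2 fun m _ => ?_).ne
    have h1 := htail (dyadicCube n 0 m) 0
    simp only [Finset.range_zero, Finset.sum_empty, sub_zero, add_zero] at h1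
    exact lt_of_le_of_lt h1 (lt_top_iff_ne_top.2 (hloc m))
  · intro K hK
    obtain ⟨F, hF⟩ := ts_compact_cover n K hK
    have h1 : Tendsto (fun N : ℕ => (∑ m ∈ F, ∑' i, eLpNorm (vseq V (i + N)) r
        (volume.restrict (dyadicCube n 0 m)) ^ ρ) ^ (ρ⁻¹)) atTop (nhds 0) := by
      have h2 : Tendsto (fun N : ℕ => ∑ m ∈ F, ∑' i, eLpNorm (vseq V (i + N)) r
          (volume.restrict (dyadicCube n 0 m)) ^ ρ) atTop (nhds (∑ m ∈ F, 0)) :=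
        tendsto_finset_sum _ fun m _ => ENNReal.tendsto_sum_nat_add
          (fun i => eLpNorm (vseq V i) r (volume.restrict (dyadicCube n 0 m)) ^ ρ) (hloc m)
      have h3 := (ENNReal.continuous_rpow_const (y := ρ⁻¹)).tendsto (∑ m ∈ F, (0 : ℝ≥0∞))
      have h4 := h3.comp h2
      simpa [Function.comp_def, hρ] using h4
    refine tendsto_of_tendsto_of_tendsto_of_le_of_le tendsto_const_nhds h1
      (fun N => zero_le) fun N => ?_
    have e : eLpNorm (fun x => (∑ k ∈ Finset.range N, vseq V k x) - φ x) r (volume.restrict K) =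
        eLpNorm (fun x => φ x - ∑ k ∈ Finset.range N, vseq V k x) r (volume.restrict K) := by
      rw [← eLpNorm_neg]
      congr 1
      funext x
      simp
    simp only [e]
    refine (hcpt K F hF _).trans ?_
    refine ENNReal.rpow_le_rpow (Finset.sum_le_sum fun m _ => ?_) (by positivity)
    exact htail _ N
  · rw [add_mul]
    have hroot : ∀ u : ℝ≥0∞, u ^ ρ ≤ S * A ^ ρ → u ≤ S ^ (ρ⁻¹) * A := by
      intro u hu
      have h1 : S ^ (ρ⁻¹) * A = (S * A ^ ρ) ^ (ρ⁻¹) := by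
        rw [ENNReal.mul_rpow_of_nonneg _ _ (by positivity), ← ENNReal.rpow_mul,
          mul_inv_cancel₀ hρ.ne', ENNReal.rpow_one]
      rw [h1, ENNReal.le_rpow_inv_iff hρ]
      exact hu
    refine add_le_add (hroot _ ?_) (hroot _ ?_)
    · have hk : ∀ k : ℕ, lqNorm p (fun m : Fin n → ℤ =>
          (2 : ℝ≥0∞) ^ (((k * n : ℕ) : ℝ) / r.toReal) * T k m *
            eLpNorm (fun x => φ x - V k x) r (volume.restrict (dyadicCube n k m))) ^ ρ ≤
          ∑' i : ℕ, (w (i + 1) * a (i + (k + 1))) ^ ρ := by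
        intro k
        refine (ts_lq_rho hρ hρp _ (fun (i : ℕ) (m : Fin n → ℤ) =>
          (2 : ℝ≥0∞) ^ (((k * n : ℕ) : ℝ) / r.toReal) * T k m *
            eLpNorm (vseq V (i + (k + 1))) r (volume.restrict (dyadicCube n k m))) ?_).trans ?_
        · intro m
          have h1 := htail (dyadicCube n k m) (k + 1)
          simp only [ts_vseq_sum] at h1
          simp only [ENNReal.mul_rpow_of_nonneg _ _ hρ.le] at h1 ⊢
          rw [ENNReal.tsum_mul_left]
          exact mul_le_mul' le_rfl h1
        · refine ENNReal.tsum_le_tsum fun i => ENNReal.rpow_le_rpow ?_ hρ.le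
          exact hmain k (i + 1) _ (by ring)
      refine (ts_lq_rho hρ hρq _ (fun i k => w (i + 1) * a (i + (k + 1))) hk).trans ?_
      calc ∑' i : ℕ, lqNorm q (fun k => w (i + 1) * a (i + (k + 1))) ^ ρ
          ≤ ∑' i : ℕ, (w (i + 1) * A) ^ ρ := by
            refine ENNReal.tsum_le_tsum fun i => ENNReal.rpow_le_rpow ?_ hρ.le
            rw [ts_lq_const_mul hq]
            refine mul_le_mul' le_rfl ?_
            exact ts_lq_comp_le (fun k => i + (k + 1)) (fun x y h => by simpa using h) a
        _ ≤ ∑' i : ℕ, (w i * A) ^ ρ :=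
            ENNReal.tsum_comp_le_tsum_of_injective (add_left_injective 1)
              (fun i => (w i * A) ^ ρ)
        _ = S * A ^ ρ := hwA
    · refine (ts_lq_rho hρ hρp _ (fun (i : ℕ) (m : Fin n → ℤ) => T 0 m *
            eLpNorm (vseq V i) r (volume.restrict (dyadicCube n 0 m))) ?_).trans ?_
      · intro m
        have h1 := htail (dyadicCube n 0 m) 0
        simp only [Finset.range_zero, Finset.sum_empty, sub_zero, add_zero] at h1
        simp only [ENNReal.mul_rpow_of_nonneg _ _ hρ.le] at h1 ⊢
        rw [ENNReal.tsum_mul_left]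
        exact mul_le_mul' le_rfl h1
      · rw [← hwA]
        refine ENNReal.tsum_le_tsum fun i => ENNReal.rpow_le_rpow ?_ hρ.le
        exact (hmain0 i).trans (mul_le_mul' le_rfl (haA i))

end
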